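/- For every D ∈ 𝓔_∞, the restriction of the equivalence relation E_1^tail to the cube [∅,D] = {A ∈ 𝓔_∞ : A ≤ D} is Borel bireducible with the equivalence relation E_1 on 2^{ℕ×ℕ}. -/

import Mathlib

open Classical

/-- The space `𝓔_∞` of equivalence relations on `ℕ` with infinitely many classes
(infinite partitions of `ℕ`). -/
def Einf : Type := {A : Setoid ℕ // Infinite (Quotient A)}

namespace Einf

/-- `Coarsen A B` (written `A ≤ B` in the paper): `A` is a coarsening of `B`,
i.e. every `A`-class is a union of `B`-classes. -/
def Coarsen (A B : Einf) : Prop := ∀ i j : ℕ, B.1 i j → A.1 i j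

/-- `μ_n(A)`: the `(n+1)`-st smallest minimal representative of an `A`-class. -/
noncomputable def mu (A : Einf) (n : ℕ) : ℕ :=
  Nat.nth (fun k => ∀ m, A.1 m k → k ≤ m) n

/-- `𝓔_∞^fin`: equivalence relations on initial segments `{0,…,k−1}` of `ℕ`. -/
def FinApprox : Type := Σ k : ℕ, Setoid (Fin k)

/-- `r_n(A)`: the restriction of `A` to `{0,…,μ_n(A)−1}`. -/
noncomputable def rn (A : Einf) (n : ℕ) : FinApprox :=
  ⟨A.mu n, Setoid.comap (fun i => (i : ℕ)) A.1⟩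

/-- `s ⊑ A`: `s` is an initial approximation of `A`, i.e. `s = r_n(A)` for some `n`. -/
def InitSeg (s : FinApprox) (A : Einf) : Prop := ∃ n, rn A n = s

/-- The Ellentuck cube `[s, A] = {B ∈ 𝓔_∞ : s ⊑ B and B ≤ A}`. -/
def cube (s : FinApprox) (A : Einf) : Set Einf := {B | InitSeg s B ∧ Coarsen B A}

/-- The identification of `𝓔_∞` with `𝓒𝓢 ⊆ 2^{ℕ×ℕ}`: `toCS A n m = 1` iff
`m` is `A`-equivalent to `μ_n(A)` (so the `n`-th row is the `A`-class of `μ_n(A)`). -/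
noncomputable def toCS (A : Einf) : ℕ → ℕ → Bool :=
  fun n m => decide (A.1 m (A.mu n))

/-- The Borel structure of the Polish topology on `𝓔_∞`, pulled back from `2^{ℕ×ℕ}`. -/
noncomputable instance : MeasurableSpace Einf :=
  MeasurableSpace.comap toCS inferInstance

/-- `𝓧 ⊆ 𝓔_∞` is Ramsey null. -/
def RamseyNull (X : Set Einf) : Prop :=
  ∀ s A, (cube s A).Nonempty → ∃ B ∈ cube s A, cube s B ∩ X = ∅

/-- `𝓧 ⊆ 𝓔_∞` is Ramsey conull: its complement is Ramsey null. -/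
def RamseyConull (X : Set Einf) : Prop := RamseyNull Xᶜ

end Einf

open Einf

/-- The equivalence relation `E₁` on `2^{ℕ×ℕ}`. -/
def E1 (x y : ℕ → ℕ → Bool) : Prop := ∃ n₀ : ℕ, ∀ n m : ℕ, x (n₀ + n) m = y (n₀ + n) m

/-- The equivalence relation `E₁^tail` on `2^{ℕ×ℕ}`. -/
def E1tail (x y : ℕ → ℕ → Bool) : Prop :=
  ∃ nx ny : ℕ, ∀ n m : ℕ, x (nx + n) m = y (ny + n) m

/-!
Index the classes of a partition by their minimum instead of by their position: let row `k` be the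
class with minimum `k`, or empty if `k` is not the minimum of a class. Equal tails of the lists of
classes start at the same minimum, and conversely agreement from row `K` on means that the lists
agree once the classes with minimum below `K` are dropped. Hence this reindexing reduces `E₁^tail`
to `E₁`; the shift between the tails is absorbed by the minima.

In the other direction, arrange the classes of `D` in a square array by the pairing function
`⟨·,·⟩`. Code `x` by merging, for each `n`, the class at position `⟨n, 0⟩` with those at the
positions `⟨n, m + 1⟩` for which `x n m = 1`, and throw all remaining classes into the class of
`⟨0, 0⟩`. The minimum of the `n`-th merged class is that of the class of `D` at `⟨n, 0⟩`, whatever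
`x` is, and for `n > 0` this merged class determines and is determined by the `n`-th row of `x`.
-/

section FiberRows

theorem E1_iff_eventually_eq {x y : ℕ → ℕ → Bool} :
    E1 x y ↔ ∀ᶠ n in Filter.atTop, x n = y n := by
  simp only [E1, Filter.eventually_atTop, funext_iff]
  constructor
  · rintro ⟨n₀, h⟩
    refine ⟨n₀, fun n hn => ?_⟩
    obtain ⟨j, rfl⟩ := Nat.exists_eq_add_of_le hn
    exact h j
  · rintro ⟨n₀, h⟩
    exact ⟨n₀, fun n => h (n₀ + n) (Nat.le_add_right n₀ n)⟩

theorem E1tail_iff_exists_eq {x y : ℕ → ℕ → Bool} :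
    E1tail x y ↔ ∃ a b, ∀ n, x (a + n) = y (b + n) := by
  simp only [E1tail, funext_iff]

/-- The element of `2^{ℕ×ℕ}` whose `k`-th row is the indicator function of the fibre `g⁻¹{k}`. -/
noncomputable def fiberRows (g : ℕ → ℕ) : ℕ → ℕ → Bool :=
  fun k m => decide (g m = k)

theorem fiberRows_eq_true {g : ℕ → ℕ} {k m : ℕ} : fiberRows g k m = true ↔ g m = k :=
  decide_eq_true_iff

theorem fiberRows_eq_iff {g h : ℕ → ℕ} {k l : ℕ} :
    fiberRows g k = fiberRows h l ↔ ∀ m, g m = k ↔ h m = l := by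
  rw [funext_iff]
  exact forall_congr' fun m => by rw [Bool.eq_iff_iff, fiberRows_eq_true, fiberRows_eq_true]

theorem measurable_fiberRows {α : Type*} [MeasurableSpace α] {g : α → ℕ → ℕ}
    (hg : ∀ m, Measurable fun a => g a m) : Measurable fun a => fiberRows (g a) := by
  refine measurable_pi_iff.2 fun k => measurable_pi_iff.2 fun m => measurable_to_bool ?_
  simpa only [Set.preimage, Set.mem_singleton_iff, fiberRows_eq_true] using
    hg m (measurableSet_singleton k)

theorem E1_fiberRows_comp_iff {b s : ℕ → ℕ} (hb : StrictMono b) (hs : s.Surjective)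
    (g h : ℕ → ℕ) :
    E1 (fiberRows (b ∘ g ∘ s)) (fiberRows (b ∘ h ∘ s)) ↔ E1 (fiberRows g) (fiberRows h) := by
  simp only [E1_iff_eventually_eq, fiberRows_eq_iff, Function.comp_apply]
  constructor
  · intro H
    filter_upwards [hb.tendsto_atTop.eventually H] with n hn
    rw [hs.forall]
    simpa only [hb.injective.eq_iff] using hn
  · intro H
    obtain ⟨N, hN⟩ := Filter.eventually_atTop.1 H
    filter_upwards [Filter.eventually_ge_atTop (b N)] with k hk m
    constructor <;> rintro rfl <;> rw [hb.injective.eq_iff]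
    · exact (hN _ (hb.le_iff_le.1 hk) _).1 rfl
    · exact (hN _ (hb.le_iff_le.1 hk) _).2 rfl

end FiberRows

namespace Einf

section MinRep

variable {A : Einf}

/-- `k` belongs to `μ(A)`, i.e. `k` is the minimum of its `A`-class. -/
def IsMinRep (A : Einf) (k : ℕ) : Prop := ∀ m, A.1 m k → k ≤ m

/-- The minimum of the `A`-class of `i`. -/
noncomputable def minRep (A : Einf) (i : ℕ) : ℕ := sInf {k | A.1 k i}

theorem minRep_rel (A : Einf) (i : ℕ) : A.1 (A.minRep i) i :=
  Nat.sInf_mem (s := {k | A.1 k i}) ⟨i, A.1.refl i⟩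

theorem minRep_le_of_rel {i k : ℕ} (h : A.1 k i) : A.minRep i ≤ k :=
  Nat.sInf_le h

theorem minRep_le (A : Einf) (i : ℕ) : A.minRep i ≤ i :=
  minRep_le_of_rel (A.1.refl i)

theorem isMinRep_minRep (A : Einf) (i : ℕ) : A.IsMinRep (A.minRep i) :=
  fun _ hm => minRep_le_of_rel (A.1.trans hm (A.minRep_rel i))

theorem minRep_eq_iff {i k : ℕ} : A.minRep i = k ↔ A.1 k i ∧ A.IsMinRep k := by
  constructor
  · rintro rfl
    exact ⟨A.minRep_rel i, A.isMinRep_minRep i⟩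
  · rintro ⟨hki, hk⟩
    exact le_antisymm (minRep_le_of_rel hki) (hk _ (A.1.trans (A.minRep_rel i) (A.1.symm hki)))

theorem isMinRep_iff_minRep_eq {k : ℕ} : A.IsMinRep k ↔ A.minRep k = k :=
  (minRep_eq_iff.trans (and_iff_right (A.1.refl k))).symm

theorem minRep_eq_minRep_iff {i j : ℕ} : A.minRep i = A.minRep j ↔ A.1 i j := by
  rw [minRep_eq_iff, and_iff_left (A.isMinRep_minRep j)]
  exact ⟨fun h => A.1.trans (A.1.symm h) (A.minRep_rel j),
    fun h => A.1.trans (A.minRep_rel j) (A.1.symm h)⟩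

theorem infinite_setOf_isMinRep (A : Einf) : {k | A.IsMinRep k}.Infinite := by
  have : Infinite (Quotient A.1) := A.2
  let minOfClass : Quotient A.1 → {k | A.IsMinRep k} :=
    Quotient.lift (fun i => ⟨A.minRep i, A.isMinRep_minRep i⟩)
      fun _ _ h => Subtype.ext (minRep_eq_minRep_iff.2 h)
  refine Set.infinite_coe_iff.1 (Infinite.of_injective minOfClass ?_)
  rintro ⟨i⟩ ⟨j⟩ h
  exact Quotient.sound (minRep_eq_minRep_iff.1 (congrArg Subtype.val h))

theorem strictMono_mu (A : Einf) : StrictMono A.mu :=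
  Nat.nth_strictMono A.infinite_setOf_isMinRep

theorem isMinRep_mu (A : Einf) (n : ℕ) : A.IsMinRep (A.mu n) :=
  Nat.nth_mem_of_infinite A.infinite_setOf_isMinRep n

/-- The position of the `A`-class of `i` when the classes are listed by increasing minimum, so
that `i` belongs to the class of `μ_n(A)` for `n = A.index i`. -/
noncomputable def index (A : Einf) (i : ℕ) : ℕ := Nat.count A.IsMinRep (A.minRep i)

theorem mu_index (A : Einf) (i : ℕ) : A.mu (A.index i) = A.minRep i :=
  Nat.nth_count (A.isMinRep_minRep i)

theorem minRep_eq_mu_iff {i n : ℕ} : A.minRep i = A.mu n ↔ A.index i = n := by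
  rw [← mu_index, A.strictMono_mu.injective.eq_iff]

theorem index_mu (A : Einf) (n : ℕ) : A.index (A.mu n) = n :=
  minRep_eq_mu_iff.1 (isMinRep_iff_minRep_eq.1 (A.isMinRep_mu n))

theorem index_surjective (A : Einf) : Function.Surjective A.index :=
  fun n => ⟨A.mu n, A.index_mu n⟩

theorem index_eq_of_rel {i j : ℕ} (h : A.1 i j) : A.index i = A.index j :=
  congrArg (Nat.count A.IsMinRep) (minRep_eq_minRep_iff.2 h)

theorem toCS_eq_true {n m : ℕ} : toCS A n m = true ↔ A.minRep m = A.mu n := by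
  rw [minRep_eq_iff, and_iff_left (A.isMinRep_mu n)]
  exact decide_eq_true_iff.trans ⟨A.1.symm, A.1.symm⟩

theorem toCS_eq_fiberRows_index (A : Einf) : toCS A = fiberRows A.index := by
  ext n m
  rw [Bool.eq_iff_iff, toCS_eq_true, fiberRows_eq_true, minRep_eq_mu_iff]

end MinRep

section Tail

variable {A B : Einf}

theorem mu_le_mu_of_toCS_eq {a b : ℕ} (h : toCS A a = toCS B b) : B.mu b ≤ A.mu a := by
  have mu_mem : toCS A a (A.mu a) = true :=
    toCS_eq_true.2 (isMinRep_iff_minRep_eq.1 (A.isMinRep_mu a))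
  rw [h, toCS_eq_true] at mu_mem
  exact mu_mem ▸ B.minRep_le (A.mu a)

theorem minRep_eq_of_toCS_tail_eq {a b m : ℕ} (h : ∀ n, toCS A (a + n) = toCS B (b + n))
    (hm : A.mu a ≤ A.minRep m) : B.minRep m = A.minRep m := by
  rw [← mu_index, A.strictMono_mu.le_iff_le] at hm
  obtain ⟨n, hn⟩ := Nat.exists_eq_add_of_le hm
  have mem_row : toCS A (a + n) m = true := toCS_eq_true.2 (minRep_eq_mu_iff.2 hn)
  have mem_row' : toCS B (b + n) m = true := h n ▸ mem_row
  calc B.minRep m = B.mu (b + n) := toCS_eq_true.1 mem_row'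
    _ = A.mu (a + n) :=
      le_antisymm (mu_le_mu_of_toCS_eq (h n)) (mu_le_mu_of_toCS_eq (h n).symm)
    _ = A.minRep m := (toCS_eq_true.1 mem_row).symm

theorem index_eq_of_fiberRows_minRep_eq {K m n : ℕ}
    (h : ∀ k, K ≤ k → fiberRows A.minRep k = fiberRows B.minRep k)
    (hm : A.index m = Nat.count A.IsMinRep K + n) :
    B.index m = Nat.count B.IsMinRep K + n := by
  simp only [fiberRows_eq_iff] at h
  have le_minRep : K ≤ A.minRep m := by
    by_contra! hlt
    have count_lt : A.index m < Nat.count A.IsMinRep K :=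
      Nat.count_strict_mono (A.isMinRep_minRep m) hlt
    omega
  have minRep_eq : B.minRep m = A.minRep m := (h _ le_minRep m).1 rfl
  have isMinRep_iff : (fun j => A.IsMinRep (K + j)) = fun j => B.IsMinRep (K + j) := by
    funext j
    rw [isMinRep_iff_minRep_eq, isMinRep_iff_minRep_eq, h _ (Nat.le_add_right K j)]
  obtain ⟨j, hj⟩ := Nat.exists_eq_add_of_le le_minRep
  rw [index, hj, Nat.count_add, Nat.add_left_cancel_iff] at hm
  rw [index, minRep_eq, hj, Nat.count_add, Nat.add_left_cancel_iff, ← hm]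
  simp only [isMinRep_iff]

theorem E1tail_toCS_iff_E1_fiberRows_minRep :
    E1tail (toCS A) (toCS B) ↔ E1 (fiberRows A.minRep) (fiberRows B.minRep) := by
  rw [E1tail_iff_exists_eq, E1_iff_eventually_eq, Filter.eventually_atTop]
  constructor
  · rintro ⟨a, b, h⟩
    refine ⟨max (A.mu a) (B.mu b), fun k hk => fiberRows_eq_iff.2 fun m => ⟨?_, ?_⟩⟩ <;> rintro rfl
    · exact minRep_eq_of_toCS_tail_eq h (le_of_max_le_left hk)
    · exact minRep_eq_of_toCS_tail_eq (fun n => (h n).symm) (le_of_max_le_right hk)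
  · rintro ⟨K, h⟩
    refine ⟨Nat.count A.IsMinRep K, Nat.count B.IsMinRep K, fun n => ?_⟩
    rw [toCS_eq_fiberRows_index, toCS_eq_fiberRows_index, fiberRows_eq_iff]
    exact fun m => ⟨index_eq_of_fiberRows_minRep_eq h,
      index_eq_of_fiberRows_minRep_eq fun k hk => (h k hk).symm⟩

end Tail

section Measurability

variable {α : Type*} [MeasurableSpace α] {f : α → Einf}

theorem measurableSet_rel (i j : ℕ) : MeasurableSet {A : Einf | A.1 i j} := by
  have toCS_apply (n m : ℕ) : Measurable fun A : Einf => toCS A n m :=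
    (measurable_pi_apply m).comp
      ((measurable_pi_apply n).comp (comap_measurable toCS))
  have same_row : {A : Einf | A.1 i j} =
      ⋃ n, {A | toCS A n i = true} ∩ {A | toCS A n j = true} := by
    ext A
    simp only [Set.mem_iUnion, Set.mem_inter_iff, Set.mem_ofPred_eq, toCS_eq_true,
      ← minRep_eq_minRep_iff]
    exact ⟨fun h => ⟨A.index j, h.trans (A.mu_index j).symm, (A.mu_index j).symm⟩,
      fun ⟨_, hi, hj⟩ => hi.trans hj.symm⟩
  rw [same_row]
  exact MeasurableSet.iUnion fun n => ((toCS_apply n i) (measurableSet_singleton true)).inter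
    ((toCS_apply n j) (measurableSet_singleton true))

theorem measurableSet_isMinRep (hf : ∀ i j, MeasurableSet {a | (f a).1 i j}) (k : ℕ) :
    MeasurableSet {a | (f a).IsMinRep k} := by
  have setOf_eq : {a | (f a).IsMinRep k} = ⋂ j, {a | (f a).1 j k}ᶜ ∪ {_a | k ≤ j} := by
    ext a
    simp [IsMinRep, imp_iff_not_or]
  rw [setOf_eq]
  exact MeasurableSet.iInter fun j => (hf j k).compl.union (MeasurableSet.const _)

theorem measurable_minRep (hf : ∀ i j, MeasurableSet {a | (f a).1 i j}) (m : ℕ) :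
    Measurable fun a => (f a).minRep m := by
  refine measurable_to_countable' fun k => ?_
  simp only [Set.preimage, Set.mem_singleton_iff, minRep_eq_iff]
  exact (hf k m).inter (measurableSet_isMinRep hf k)

theorem measurable_index (hf : ∀ i j, MeasurableSet {a | (f a).1 i j}) (m : ℕ) :
    Measurable fun a => (f a).index m := by
  have measurable_count (k : ℕ) : Measurable fun a => Nat.count (f a).IsMinRep k := by
    induction k with
    | zero => simp
    | succ k ih =>
      simp only [Nat.count_succ]
      exact ih.add (Measurable.ite (measurableSet_isMinRep hf k) measurable_const measurable_const)
  have measurable_uncurry_count :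
      Measurable fun p : α × ℕ => Nat.count (f p.1).IsMinRep p.2 :=
    measurable_from_prod_countable_left measurable_count
  exact measurable_uncurry_count.comp (measurable_id.prodMk (measurable_minRep hf m))

theorem measurable_of_measurableSet_rel (hf : ∀ i j, MeasurableSet {a | (f a).1 i j}) :
    Measurable f := by
  refine measurable_comap_iff.2 ?_
  simpa only [Function.comp_def, toCS_eq_fiberRows_index] using
    measurable_fiberRows (measurable_index hf)

end Measurability

/-- The partition of `ℕ` into the nonempty fibres of a function with infinite range. -/
def ker (g : ℕ → ℕ) (hg : (Set.range g).Infinite) : Einf :=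
  ⟨Setoid.ker g, by
    have : Infinite (Set.range g) := hg.to_subtype
    exact Infinite.of_injective _ (Setoid.quotientKerEquivRange g).symm.injective⟩

theorem minRep_ker {g : ℕ → ℕ} (hg : (Set.range g).Infinite) (hle : ∀ i, g i ≤ i)
    (hidem : ∀ i, g (g i) = g i) : (ker g hg).minRep = g := by
  funext i
  refine minRep_eq_iff.2 ⟨hidem i, fun m (hm : g m = g (g i)) => ?_⟩
  rw [← hidem i, ← hm]
  exact hle m

end Einf

section RowLabel

/-- The labelling of `ℕ ≃ ℕ × ℕ` that codes `x` by its fibres. The cell `(n, 0)` always carries the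
label `n`, so that every label occurs; the cell `(n, m + 1)` carries `n` if `x n m = 1` and the
default label `0` otherwise. Row `0` of `x` is lost, which `E₁` does not see. -/
def rowLabel (x : ℕ → ℕ → Bool) (i : ℕ) : ℕ :=
  match i.unpair with
  | (n, 0) => n
  | (n, m + 1) => if x n m then n else 0

variable (x y : ℕ → ℕ → Bool)

theorem rowLabel_pair_zero (n : ℕ) : rowLabel x (Nat.pair n 0) = n := by
  simp only [rowLabel, Nat.unpair_pair]

theorem rowLabel_surjective : Function.Surjective (rowLabel x) :=
  fun n => ⟨Nat.pair n 0, rowLabel_pair_zero x n⟩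

theorem rowLabel_pair_succ (n m : ℕ) :
    rowLabel x (Nat.pair n (m + 1)) = if x n m then n else 0 := by
  simp only [rowLabel, Nat.unpair_pair]

theorem pair_rowLabel_zero_le (i : ℕ) : Nat.pair (rowLabel x i) 0 ≤ i := by
  obtain ⟨n, m, rfl⟩ : ∃ n m, Nat.pair n m = i := ⟨_, _, Nat.pair_unpair i⟩
  cases m with
  | zero => rw [rowLabel_pair_zero]
  | succ m =>
    rw [rowLabel_pair_succ]
    split_ifs
    · exact (Nat.pair_lt_pair_right n m.succ_pos).le
    · exact Nat.zero_le _

theorem measurable_rowLabel (i : ℕ) : Measurable fun x => rowLabel x i := by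
  obtain ⟨n, m, rfl⟩ : ∃ n m, Nat.pair n m = i := ⟨_, _, Nat.pair_unpair i⟩
  cases m with
  | zero => simp only [rowLabel_pair_zero, measurable_const]
  | succ m =>
    simp only [rowLabel_pair_succ]
    have measurable_entry : Measurable fun x : ℕ → ℕ → Bool => x n m := by fun_prop
    exact Measurable.ite (measurable_entry (measurableSet_singleton true))
      measurable_const measurable_const

variable {x y}

theorem fiberRows_rowLabel_eq_iff {n : ℕ} (hn : n ≠ 0) :
    fiberRows (rowLabel x) n = fiberRows (rowLabel y) n ↔ x n = y n := by
  have label_eq_iff (z : ℕ → ℕ → Bool) (a m : ℕ) :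
      rowLabel z (Nat.pair a (m + 1)) = n ↔ a = n ∧ z n m = true := by
    rw [rowLabel_pair_succ]
    grind
  rw [fiberRows_eq_iff]
  constructor
  · intro h
    funext m
    simpa [label_eq_iff] using h (Nat.pair n (m + 1))
  · intro h i
    obtain ⟨a, m, rfl⟩ : ∃ a m, Nat.pair a m = i := ⟨_, _, Nat.pair_unpair i⟩
    cases m with
    | zero => simp only [rowLabel_pair_zero]
    | succ m => simp only [label_eq_iff, h]

theorem E1_fiberRows_rowLabel_iff :
    E1 (fiberRows (rowLabel x)) (fiberRows (rowLabel y)) ↔ E1 x y := by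
  simp only [E1_iff_eventually_eq]
  refine Filter.eventually_congr ?_
  filter_upwards [Filter.eventually_ne_atTop 0] with n hn using fiberRows_rowLabel_eq_iff hn

end RowLabel

namespace Einf

section Merge

variable (D : Einf)

theorem strictMono_mu_pair_zero : StrictMono fun n => D.mu (Nat.pair n 0) :=
  fun _ _ h => D.strictMono_mu (Nat.pair_lt_pair_left 0 h)

/-- The map sending each point to the minimum of its class in `merge D x`. It is constant on the
classes of `D`; all classes labelled `n` go to the minimum of the class with index `⟨n, 0⟩`. -/
noncomputable def mergeMin (x : ℕ → ℕ → Bool) : ℕ → ℕ :=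
  (fun n => D.mu (Nat.pair n 0)) ∘ rowLabel x ∘ D.index

theorem infinite_range_mergeMin (x : ℕ → ℕ → Bool) : (Set.range (D.mergeMin x)).Infinite := by
  rw [mergeMin, ((rowLabel_surjective x).comp D.index_surjective).range_comp]
  exact Set.infinite_range_of_injective D.strictMono_mu_pair_zero.injective

theorem mergeMin_le (x : ℕ → ℕ → Bool) (i : ℕ) : D.mergeMin x i ≤ i :=
  calc D.mergeMin x i ≤ D.mu (D.index i) :=
        D.strictMono_mu.monotone (pair_rowLabel_zero_le x (D.index i))
    _ = D.minRep i := D.mu_index i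
    _ ≤ i := D.minRep_le i

theorem mergeMin_mergeMin (x : ℕ → ℕ → Bool) (i : ℕ) :
    D.mergeMin x (D.mergeMin x i) = D.mergeMin x i := by
  simp only [mergeMin, Function.comp_apply, index_mu, rowLabel_pair_zero]

/-- The coarsening of `D` coding `x`, in which two classes of `D` are merged when `rowLabel x`
takes the same value at their indices. -/
noncomputable def merge (x : ℕ → ℕ → Bool) : Einf :=
  ker (D.mergeMin x) (D.infinite_range_mergeMin x)

theorem minRep_merge (x : ℕ → ℕ → Bool) : (D.merge x).minRep = D.mergeMin x :=
  minRep_ker (D.infinite_range_mergeMin x) (D.mergeMin_le x) (D.mergeMin_mergeMin x)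

theorem coarsen_merge (x : ℕ → ℕ → Bool) : Coarsen (D.merge x) D :=
  fun _ _ h => congrArg (fun n => D.mu (Nat.pair (rowLabel x n) 0)) (index_eq_of_rel h)

theorem measurable_merge : Measurable D.merge := by
  have measurable_mergeMin (i : ℕ) : Measurable fun x => D.mergeMin x i :=
    (measurable_from_nat (f := fun n => D.mu (Nat.pair n 0))).comp (measurable_rowLabel _)
  exact measurable_of_measurableSet_rel fun i j =>
    measurableSet_eq_fun (measurable_mergeMin i) (measurable_mergeMin j)

theorem E1tail_toCS_merge_iff (x y : ℕ → ℕ → Bool) :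
    E1tail (toCS (D.merge x)) (toCS (D.merge y)) ↔ E1 x y := by
  rw [E1tail_toCS_iff_E1_fiberRows_minRep, minRep_merge, minRep_merge, mergeMin, mergeMin,
    E1_fiberRows_comp_iff D.strictMono_mu_pair_zero D.index_surjective, E1_fiberRows_rowLabel_iff]

end Merge

end Einf

/-- For every `D ∈ 𝓔_∞`, the restriction of `E₁^tail` (transported to `𝓔_∞` via the
identification with `𝓒𝓢`) to the cube `[∅,D] = {A : A ≤ D}` is Borel bireducible with
`E₁` on `2^{ℕ×ℕ}`. -/
theorem E1tail_on_cube_bireducible_E1 (D : Einf) :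
    (∃ f : {A : Einf // Coarsen A D} → (ℕ → ℕ → Bool), Measurable f ∧
      ∀ A A' : {A : Einf // Coarsen A D},
        (E1tail (toCS A.1) (toCS A'.1) ↔ E1 (f A) (f A'))) ∧
    (∃ g : (ℕ → ℕ → Bool) → {A : Einf // Coarsen A D}, Measurable g ∧
      ∀ x y : ℕ → ℕ → Bool, (E1 x y ↔ E1tail (toCS (g x).1) (toCS (g y).1))) := by
  refine ⟨⟨fun A => fiberRows A.1.minRep, ?_, fun A A' => E1tail_toCS_iff_E1_fiberRows_minRep⟩,
    fun x => ⟨D.merge x, D.coarsen_merge x⟩, D.measurable_merge.subtype_mk,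
    fun x y => (D.E1tail_toCS_merge_iff x y).symm⟩
  exact (measurable_fiberRows (measurable_minRep measurableSet_rel)).comp measurable_subtype_coe
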